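/- arXiv:1106.5677 — 2 statements merged into one kernel-verified Lean document; each statement's English description precedes it below -/
import Mathlib

section
/- Let k, c, d be natural numbers and let χ₁, …, χ_d be nonzero elements of ℤ^k. In the polynomial ring R = ℂ[y₁,…,y_c, x₁,…,x_d, z₁,…,z_d], assign each variable y_j the weight 0 ∈ ℤ^k, each x_i the weight χ_i, and each z_i the weight −χ_i, and define the weight of a monomial to be the sum, with multiplicity, of the weights of its variables. Let A ⊆ R be the ℂ-subalgebra spanned by all monomials of weight 0. Then the Krull dimension of A equals c + d if and only if χ₁, …, χ_d are linearly independent over ℚ (as elements of ℚ^k). -/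
open MvPolynomial

noncomputable section

/-- The variables of the polynomial ring `R = ℂ[y₁,…,y_c, x₁,…,x_d, z₁,…,z_d]`:
`Sum.inl j` is `y_j`, `Sum.inr (Sum.inl i)` is `x_i`, `Sum.inr (Sum.inr i)` is `z_i`. -/
abbrev SymVar (c d : ℕ) : Type := Fin c ⊕ (Fin d ⊕ Fin d)

/-- The `ℤ^k`-weight of each variable: `y_j` has weight `0`, `x_i` has weight `χ i`,
`z_i` has weight `-χ i`. -/
def varWeight (k c d : ℕ) (χ : Fin d → Fin k → ℤ) : SymVar c d → Fin k → ℤ :=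
  Sum.elim (fun _ => 0) (Sum.elim (fun i => χ i) (fun i => -χ i))

/-- The weight of a monomial with exponent vector `e`: the sum, with multiplicity, of the
weights of its variables. -/
def monWeight (k c d : ℕ) (χ : Fin d → Fin k → ℤ) (e : SymVar c d →₀ ℕ) : Fin k → ℤ :=
  e.sum fun v n => n • varWeight k c d χ v

/-- Adjoined generators in the independent case. -/
def excGen (c d : ℕ) : Fin c ⊕ Fin d → MvPolynomial (SymVar c d) ℂ :=
  Sum.elim (fun j => X (Sum.inl j)) (fun i => X (Sum.inr (Sum.inl i)) * X (Sum.inr (Sum.inr i)))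

/-- A retraction. -/
def excRet (c d : ℕ) : SymVar c d → MvPolynomial (Fin c ⊕ Fin d) ℂ :=
  Sum.elim (fun j => X (Sum.inl j)) (Sum.elim (fun i => X (Sum.inr i)) (fun _ => 1))

lemma excGen_injective (c d : ℕ) :
    Function.Injective (aeval (excGen c d) : MvPolynomial (Fin c ⊕ Fin d) ℂ →ₐ[ℂ] _) := by
  have h : (aeval (excRet c d)).comp (aeval (excGen c d)) = AlgHom.id ℂ _ := by
    ext v
    rcases v with j | i <;> simp [excGen, excRet]
  intro p q hpq
  have := congrArg (aeval (excRet c d)) hpq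
  rw [← AlgHom.comp_apply, ← AlgHom.comp_apply, h] at this
  simpa using this

lemma monWeight_eq (k c d : ℕ) (χ : Fin d → Fin k → ℤ) (e : SymVar c d →₀ ℕ) :
    monWeight k c d χ e =
      ∑ i, ((e (Sum.inr (Sum.inl i)) : ℤ) - (e (Sum.inr (Sum.inr i)) : ℤ)) • χ i := by
  unfold monWeight
  rw [Finsupp.sum_fintype _ _ (by simp)]
  simp [Fintype.sum_sum_type, varWeight, sub_mul, sub_eq_add_neg, add_mul, Finset.sum_add_distrib]

lemma monomial_eq_prod' (c d : ℕ) (e : SymVar c d →₀ ℕ) :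
    (monomial e (1 : ℂ)) = (∏ j, X (Sum.inl j) ^ e (Sum.inl j)) *
      ((∏ i, X (Sum.inr (Sum.inl i)) ^ e (Sum.inr (Sum.inl i))) *
        (∏ i, X (Sum.inr (Sum.inr i)) ^ e (Sum.inr (Sum.inr i)))) := by
  rw [monomial_eq, Finsupp.prod_fintype _ _ (by simp)]
  simp [Fintype.prod_sum_type]

lemma indep_int_iff (k d : ℕ) (χ : Fin d → Fin k → ℤ) :
    LinearIndependent ℚ (fun i : Fin d => fun t : Fin k => (χ i t : ℚ)) ↔
      LinearIndependent ℤ χ := by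
  rw [← LinearIndependent.iff_fractionRing (R := ℤ) (K := ℚ)]
  let f : (Fin k → ℤ) →ₗ[ℤ] (Fin k → ℚ) :=
    { toFun := fun v t => (v t : ℚ)
      map_add' := by intro a b; ext t; simp
      map_smul' := by intro a b; ext t; simp }
  have hf : LinearMap.ker f = ⊥ := by
    rw [LinearMap.ker_eq_bot]
    intro a b hab
    ext t
    have := congrFun hab t
    simpa [f] using this
  exact f.linearIndependent_iff hf

lemma dim_of_indep (k c d : ℕ) (χ : Fin d → Fin k → ℤ) (h : LinearIndependent ℤ χ) :
    ringKrullDim (Algebra.adjoin ℂ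
        {p : MvPolynomial (SymVar c d) ℂ | ∃ e : SymVar c d →₀ ℕ,
          p = monomial e 1 ∧ monWeight k c d χ e = 0}) = ((c + d : ℕ) : WithBot ℕ∞) := by
  have hA : Algebra.adjoin ℂ
        {p : MvPolynomial (SymVar c d) ℂ | ∃ e : SymVar c d →₀ ℕ,
          p = monomial e 1 ∧ monWeight k c d χ e = 0} =
      (aeval (excGen c d) : MvPolynomial (Fin c ⊕ Fin d) ℂ →ₐ[ℂ] _).range := by
    rw [← Algebra.adjoin_range_eq_range_aeval]
    apply le_antisymm
    · apply Algebra.adjoin_le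
      rintro p ⟨e, rfl, he⟩
      rw [monWeight_eq] at he
      have h0 := Fintype.linearIndependent_iff.mp h _ he
      have h1 : ∀ i, e (Sum.inr (Sum.inr i)) = e (Sum.inr (Sum.inl i)) := by
        intro i
        have := h0 i
        omega
      rw [monomial_eq_prod']
      simp only [h1, ← Finset.prod_mul_distrib, ← mul_pow]
      refine Subalgebra.mul_mem _ (Subalgebra.prod_mem _ fun j _ => Subalgebra.pow_mem _ ?_ _)
        (Subalgebra.prod_mem _ fun i _ => Subalgebra.pow_mem _ ?_ _)
      · exact Algebra.subset_adjoin ⟨Sum.inl j, rfl⟩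
      · exact Algebra.subset_adjoin ⟨Sum.inr i, rfl⟩
    · apply Algebra.adjoin_mono
      rintro _ ⟨j | i, rfl⟩
      · refine ⟨Finsupp.single (Sum.inl j) 1, rfl, ?_⟩
        rw [monWeight_eq]
        simp
      · refine ⟨Finsupp.single (Sum.inr (Sum.inl i)) 1 + Finsupp.single (Sum.inr (Sum.inr i)) 1,
          ?_, ?_⟩
        · simp [excGen, X, monomial_mul]
        · rw [monWeight_eq]
          apply Finset.sum_eq_zero
          intro l _
          simp [Finsupp.single_apply]
  rw [hA, ← ringKrullDim_eq_of_ringEquiv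
    (AlgEquiv.ofInjective _ (excGen_injective c d)).toRingEquiv,
    MvPolynomial.ringKrullDim_of_isNoetherianRing, ringKrullDim_eq_zero_of_field]
  simp

/-- Kill all variables of rank at least `n`. -/
def killHom {σ : Type*} (r : σ → ℕ) (n : ℕ) : MvPolynomial σ ℂ →ₐ[ℂ] MvPolynomial σ ℂ :=
  aeval (fun v => if r v < n then X v else 0)

lemma killHom_comp {σ : Type*} (r : σ → ℕ) {n m : ℕ} (h : n ≤ m) (p : MvPolynomial σ ℂ) :
    killHom r n (killHom r m p) = killHom r n p := by
  rw [← AlgHom.comp_apply]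
  congr 1
  ext v : 1
  by_cases h1 : r v < m
  · simp [killHom, h1]
  · have : ¬ r v < n := by omega
    simp [killHom, h1, this]

lemma killHom_monomial_eq_zero {σ : Type*} (r : σ → ℕ) (n : ℕ) (e : σ →₀ ℕ) (v : σ)
    (hv : e v ≠ 0) (h : n ≤ r v) : killHom r n (monomial e 1) = 0 := by
  rw [killHom, aeval_monomial, Finsupp.prod]
  rw [Finset.prod_eq_zero (i := v) (by simpa using hv)]
  · simp
  · simp [not_lt.mpr h, hv]

lemma killHom_monomial_ne_zero {σ : Type*} (r : σ → ℕ) (n : ℕ) (e : σ →₀ ℕ)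
    (h : ∀ v, e v ≠ 0 → r v < n) : killHom r n (monomial e 1) ≠ 0 := by
  rw [killHom, aeval_monomial, Finsupp.prod]
  simp only [map_one, one_mul]
  rw [Finset.prod_ne_zero_iff]
  intro v hv
  have := h v (by simpa using hv)
  simp [this]

lemma dim_ge {σ : Type*} (A : Subalgebra ℂ (MvPolynomial σ ℂ)) (r : σ → ℕ) (N : ℕ)
    (h : ∀ n < N, ∃ e : σ →₀ ℕ, monomial e 1 ∈ A ∧ (∃ v, e v ≠ 0 ∧ r v = n) ∧
      ∀ v, e v ≠ 0 → r v ≤ n) : ((N : ℕ) : WithBot ℕ∞) ≤ ringKrullDim A := by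
  let P : ℕ → PrimeSpectrum A := fun n =>
    ⟨RingHom.ker ((killHom r n).comp A.val).toRingHom,
      RingHom.ker_isPrime _⟩
  have hP : ∀ n < N, P (n + 1) < P n := by
    intro n hn
    obtain ⟨e, heA, ⟨v, hv, hvn⟩, he⟩ := h n hn
    refine lt_of_le_of_ne ?_ ?_
    · intro p hp
      change killHom r n (p : MvPolynomial σ ℂ) = 0
      have hp' : killHom r (n + 1) (p : MvPolynomial σ ℂ) = 0 := hp
      rw [← killHom_comp r (Nat.le_succ n), hp', map_zero]
    · intro heq
      have h1 : (⟨monomial e 1, heA⟩ : A) ∈ (P n).asIdeal :=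
        killHom_monomial_eq_zero r n e v hv hvn.ge
      rw [← heq] at h1
      exact killHom_monomial_ne_zero r (n + 1) e (fun v hv => Nat.lt_succ_of_le (he v hv)) h1
  let s : LTSeries (PrimeSpectrum A) :=
    { length := N
      toFun := fun i => P (N - i)
      step := by
        intro i
        have hi := i.2
        have := hP (N - (i + 1)) (by omega)
        rw [show N - ((i : ℕ) + 1) + 1 = N - i by omega] at this
        simpa using this }
  exact Order.LTSeries.length_le_krullDim s

lemma dim_of_dep (k c d : ℕ) (χ : Fin d → Fin k → ℤ) (h : ¬ LinearIndependent ℤ χ) :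
    ((c + d + 1 : ℕ) : WithBot ℕ∞) ≤ ringKrullDim (Algebra.adjoin ℂ
        {p : MvPolynomial (SymVar c d) ℂ | ∃ e : SymVar c d →₀ ℕ,
          p = monomial e 1 ∧ monWeight k c d χ e = 0}) := by
  obtain ⟨g, hg, i₀, hi₀⟩ := Fintype.not_linearIndependent_iff.mp h
  let m : SymVar c d →₀ ℕ := Finsupp.equivFunOnFinite.symm
    (Sum.elim (fun _ => 0) (Sum.elim (fun i => (g i).toNat) (fun i => (-g i).toNat)))
  have mx : ∀ i, m (Sum.inr (Sum.inl i)) = (g i).toNat := fun i => rfl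
  have mz : ∀ i, m (Sum.inr (Sum.inr i)) = (-g i).toNat := fun i => rfl
  have my : ∀ j, m (Sum.inl j) = 0 := fun i => rfl
  let r : SymVar c d → ℕ := fun v => if m v ≠ 0 then 0 else
    Sum.elim (fun j : Fin c => 1 + d + (j : ℕ))
      (Sum.elim (fun i : Fin d => 1 + (i : ℕ)) (fun i : Fin d => 1 + (i : ℕ))) v
  have rx : ∀ i, r (Sum.inr (Sum.inl i)) = if (g i).toNat ≠ 0 then 0 else 1 + (i : ℕ) :=
    fun i => rfl
  have rz : ∀ i, r (Sum.inr (Sum.inr i)) = if (-g i).toNat ≠ 0 then 0 else 1 + (i : ℕ) :=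
    fun i => rfl
  have ry : ∀ j, r (Sum.inl j) = 1 + d + (j : ℕ) := fun i => rfl
  apply dim_ge _ r
  intro n hn
  rcases Nat.eq_zero_or_pos n with rfl | hn0
  · refine ⟨m, Algebra.subset_adjoin ⟨m, rfl, ?_⟩, ?_, ?_⟩
    · rw [monWeight_eq, ← hg]
      refine Finset.sum_congr rfl fun i _ => ?_
      rw [mx, mz]
      congr 1
      omega
    · by_cases h1 : 0 < g i₀
      · refine ⟨Sum.inr (Sum.inl i₀), ?_, ?_⟩
        · rw [mx]; omega
        · rw [rx, if_pos (by omega)]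
      · refine ⟨Sum.inr (Sum.inr i₀), ?_, ?_⟩
        · rw [mz]; omega
        · rw [rz, if_pos (by omega)]
    · intro v hv
      simp only [r, if_pos hv, le_refl]
  by_cases hnd : n ≤ d
  · obtain ⟨i, rfl⟩ : ∃ i : Fin d, n = 1 + (i : ℕ) := ⟨⟨n - 1, by omega⟩, by simp; omega⟩
    refine ⟨Finsupp.single (Sum.inr (Sum.inl i)) 1 + Finsupp.single (Sum.inr (Sum.inr i)) 1,
      Algebra.subset_adjoin ⟨_, rfl, ?_⟩, ?_, ?_⟩
    · rw [monWeight_eq]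
      apply Finset.sum_eq_zero
      intro l _
      simp [Finsupp.single_apply]
    · by_cases h1 : 0 < g i
      · refine ⟨Sum.inr (Sum.inr i), by simp, ?_⟩
        rw [rz, if_neg (by omega)]
      · refine ⟨Sum.inr (Sum.inl i), by simp, ?_⟩
        rw [rx, if_neg (by omega)]
    · rintro (j | l | l) hv
      · simp at hv
      · have : i = l := by
          by_contra hne
          simp [Finsupp.single_apply, hne] at hv
        subst this
        rw [rx]; split_ifs <;> omega
      · have : i = l := by
          by_contra hne
          simp [Finsupp.single_apply, hne] at hv
        subst this
        rw [rz]; split_ifs <;> omega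
  · obtain ⟨j, rfl⟩ : ∃ j : Fin c, n = 1 + d + (j : ℕ) :=
      ⟨⟨n - 1 - d, by omega⟩, by simp; omega⟩
    refine ⟨Finsupp.single (Sum.inl j) 1, Algebra.subset_adjoin ⟨_, rfl, ?_⟩,
      ⟨Sum.inl j, by simp, ry j⟩, ?_⟩
    · rw [monWeight_eq]; simp
    · intro v hv
      have : Sum.inl j = v := by
        by_contra hne
        simp [Finsupp.single_apply, hne] at hv
      subst this
      rw [ry]

/-- If `χ₁, …, χ_d ∈ ℤ^k` are nonzero, then the ℂ-subalgebra of
`R = ℂ[y₁,…,y_c, x₁,…,x_d, z₁,…,z_d]` spanned by the monomials of weight `0`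
(where `y_j` has weight `0`, `x_i` has weight `χ_i` and `z_i` has weight `-χ_i`)
has Krull dimension equal to `c + d` if and only if `χ₁, …, χ_d` are linearly
independent over `ℚ`. -/
theorem krullDim_invariant_subalgebra_eq_iff (k c d : ℕ) (χ : Fin d → Fin k → ℤ)
    (hχ : ∀ i, χ i ≠ 0) :
    ringKrullDim (Algebra.adjoin ℂ
        {p : MvPolynomial (SymVar c d) ℂ | ∃ e : SymVar c d →₀ ℕ,
          p = monomial e 1 ∧ monWeight k c d χ e = 0}) = ((c + d : ℕ) : WithBot ℕ∞) ↔
      LinearIndependent ℚ (fun i : Fin d => fun t : Fin k => (χ i t : ℚ)) := by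
  rw [indep_int_iff]
  refine ⟨fun h => ?_, dim_of_indep k c d χ⟩
  by_contra hdep
  have h1 := dim_of_dep k c d χ hdep
  rw [h] at h1
  have h2 : c + d + 1 ≤ c + d := by exact_mod_cast h1
  omega
end
end

section
/- Let k, c, d be natural numbers and let χ₁, …, χ_d be nonzero elements of ℤ^k. In the polynomial ring R = ℂ[y₁,…,y_c, x₁,…,x_d, z₁,…,z_d], assign each variable y_j the weight 0 ∈ ℤ^k, each x_i the weight χ_i, and each z_i the weight −χ_i, and define the weight of a monomial to be the sum, with multiplicity, of the weights of its variables. Let I ⊆ R be the ideal generated by all monomials of weight 0 and of positive total degree. Then the Krull dimension of the quotient ring R/I equals d. -/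
open MvPolynomial

noncomputable section

lemma ringKrullDim_le_of_quotient_prime {A : Type*} [CommRing A] (n : WithBot ℕ∞)
    (h : ∀ P : Ideal A, P.IsPrime → ringKrullDim (A ⧸ P) ≤ n) : ringKrullDim A ≤ n := by
  rw [ringKrullDim, Order.krullDim_eq_iSup_coheight]
  refine iSup_le fun p => ?_
  rw [Order.coheight_eq_krullDim_Ici]
  refine le_trans (le_of_eq ?_) (h p.asIdeal p.isPrime)
  rw [ringKrullDim_quotient]
  rfl

lemma ringKrullDim_mvPoly_fin (d : ℕ) :
    ringKrullDim (MvPolynomial (Fin d) ℂ) = (d : WithBot ℕ∞) := by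
  rw [MvPolynomial.ringKrullDim_of_isNoetherianRing, ringKrullDim_eq_zero_of_field]
  simp

/-- The nullcone ideal. -/
def nullIdeal (k c d : ℕ) (χ : Fin d → Fin k → ℤ) : Ideal (MvPolynomial (SymVar c d) ℂ) :=
  Ideal.span {p : MvPolynomial (SymVar c d) ℂ | ∃ e : SymVar c d →₀ ℕ,
        p = monomial e 1 ∧ monWeight k c d χ e = 0 ∧ e ≠ 0}

lemma y_mem (k c d : ℕ) (χ : Fin d → Fin k → ℤ) (j : Fin c) :
    (X (Sum.inl j) : MvPolynomial (SymVar c d) ℂ) ∈ nullIdeal k c d χ := by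
  refine Ideal.subset_span ⟨Finsupp.single (Sum.inl j) 1, rfl, ?_, by simp⟩
  simp [monWeight, varWeight]

lemma xz_mem (k c d : ℕ) (χ : Fin d → Fin k → ℤ) (i : Fin d) :
    (X (Sum.inr (Sum.inl i)) * X (Sum.inr (Sum.inr i)) : MvPolynomial (SymVar c d) ℂ)
      ∈ nullIdeal k c d χ := by
  refine Ideal.subset_span ⟨Finsupp.single (Sum.inr (Sum.inl i)) 1 +
    Finsupp.single (Sum.inr (Sum.inr i)) 1, ?_, ?_, ?_⟩
  · simp [X, monomial_mul]
  · rw [monWeight, Finsupp.sum_add_index' (by simp) (by intros; rw [add_smul])]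
    simp [varWeight]
  · intro h
    have := DFunLike.congr_fun h (Sum.inr (Sum.inl i))
    simp at this

lemma dim_upper (k c d : ℕ) (χ : Fin d → Fin k → ℤ) :
    ringKrullDim (MvPolynomial (SymVar c d) ℂ ⧸ nullIdeal k c d χ) ≤ (d : WithBot ℕ∞) := by
  refine ringKrullDim_le_of_quotient_prime _ fun P hP => ?_
  let I := nullIdeal k c d χ
  have : IsDomain ((MvPolynomial (SymVar c d) ℂ ⧸ I) ⧸ P) := Ideal.Quotient.isDomain P
  let g : MvPolynomial (SymVar c d) ℂ →ₐ[ℂ] ((MvPolynomial (SymVar c d) ℂ ⧸ I) ⧸ P) :=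
    (Ideal.Quotient.mkₐ ℂ P).comp (Ideal.Quotient.mkₐ ℂ I)
  have hg : Function.Surjective g :=
    (Ideal.Quotient.mkₐ_surjective ℂ P).comp (Ideal.Quotient.mkₐ_surjective ℂ I)
  have hgI : ∀ p ∈ I, g p = 0 := by
    intro p hp
    have : Ideal.Quotient.mkₐ ℂ I p = 0 := Ideal.Quotient.eq_zero_iff_mem.2 hp
    simp only [g, AlgHom.comp_apply, this, map_zero]
  have hxz : ∀ i : Fin d, g (X (Sum.inr (Sum.inl i))) = 0 ∨ g (X (Sum.inr (Sum.inr i))) = 0 := by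
    intro i
    have := hgI _ (xz_mem k c d χ i)
    rw [map_mul] at this
    exact mul_eq_zero.1 this
  classical
  let f : MvPolynomial (Fin d) ℂ →ₐ[ℂ] ((MvPolynomial (SymVar c d) ℂ ⧸ I) ⧸ P) :=
    aeval fun i => g (X (Sum.inr (Sum.inl i))) + g (X (Sum.inr (Sum.inr i)))
  have key : ∀ p, g p ∈ f.range := by
    intro p
    induction p using MvPolynomial.induction_on with
    | C a =>
      rw [← MvPolynomial.algebraMap_eq, AlgHom.commutes]
      exact f.range.algebraMap_mem a
    | add p q hp hq => rw [map_add]; exact add_mem hp hq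
    | mul_X p v hp =>
      rw [map_mul]
      refine mul_mem hp ?_
      rcases v with j | i | i
      · rw [hgI _ (y_mem k c d χ j)]; exact zero_mem _
      · rcases hxz i with h | h
        · rw [h]; exact zero_mem _
        · exact ⟨X i, by simp [f, h]⟩
      · rcases hxz i with h | h
        · exact ⟨X i, by simp [f, h]⟩
        · rw [h]; exact zero_mem _
  have hf : Function.Surjective f := by
    intro a
    obtain ⟨p, rfl⟩ := hg a
    exact key p
  rw [← ringKrullDim_mvPoly_fin d]
  exact ringKrullDim_le_of_surjective f.toRingHom hf

lemma dim_lower (k c d : ℕ) (χ : Fin d → Fin k → ℤ) (hχ : ∀ i, χ i ≠ 0) :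
    (d : WithBot ℕ∞) ≤ ringKrullDim (MvPolynomial (SymVar c d) ℂ ⧸ nullIdeal k c d χ) := by
  classical
  let s : SymVar c d → MvPolynomial (Fin d) ℂ :=
    Sum.elim (fun _ => 0) (Sum.elim (fun i => if 0 < toLex (χ i) then X i else 0)
      (fun i => if 0 < toLex (χ i) then 0 else X i))
  have hs : ∀ v, s v ≠ 0 → 0 < toLex (varWeight k c d χ v) := by
    intro v hv
    rcases v with j | i | i
    · simp [s] at hv
    · by_contra h
      exact hv (if_neg h)
    · have h : ¬ 0 < toLex (χ i) := fun h => hv (if_pos h)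
      have h0 : toLex (χ i) ≠ 0 := fun h => hχ i h
      have h1 : toLex (χ i) < 0 := lt_of_le_of_ne (not_lt.1 h) h0
      exact neg_pos.2 h1
  let f : MvPolynomial (SymVar c d) ℂ →ₐ[ℂ] MvPolynomial (Fin d) ℂ := aeval s
  have hfI : ∀ p ∈ nullIdeal k c d χ, f p = 0 := by
    intro p hp
    have : nullIdeal k c d χ ≤ RingHom.ker f := by
      refine Ideal.span_le.2 ?_
      rintro _ ⟨e, rfl, hw, he⟩
      change f (monomial e 1) = 0
      by_contra hne
      simp only [f, aeval_monomial, map_one, one_mul, Finsupp.prod] at hne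
      rw [← ne_eq, Finset.prod_ne_zero_iff] at hne
      have hpos : ∀ v ∈ e.support, 0 < e v • toLex (varWeight k c d χ v) := by
        intro v hv
        have hev := Finsupp.mem_support_iff.1 hv
        refine nsmul_pos (hs v fun h0 => hne v hv ?_) hev
        rw [h0, zero_pow hev]
      have := Finset.sum_pos hpos (Finsupp.support_nonempty_iff.2 he)
      exact this.ne' hw
    exact this hp
  rw [← ringKrullDim_mvPoly_fin d]
  refine ringKrullDim_le_of_surjective
    (Ideal.Quotient.lift (nullIdeal k c d χ) f.toRingHom hfI) ?_
  refine Ideal.Quotient.lift_surjective_of_surjective _ _ ?_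
  change Function.Surjective f
  rw [← AlgHom.range_eq_top, eq_top_iff, ← MvPolynomial.adjoin_range_X, Algebra.adjoin_le_iff]
  rintro _ ⟨i, rfl⟩
  by_cases h : 0 < toLex (χ i)
  · exact ⟨X (Sum.inr (Sum.inl i)), by simp [f, s, h]⟩
  · exact ⟨X (Sum.inr (Sum.inr i)), by simp [f, s, h]⟩

/-- If `χ₁, …, χ_d ∈ ℤ^k` are nonzero and `I` is the ideal of
`R = ℂ[y₁,…,y_c, x₁,…,x_d, z₁,…,z_d]` generated by all monomials of weight `0` and of
positive total degree (where `y_j` has weight `0`, `x_i` has weight `χ_i` and `z_i` has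
weight `-χ_i`), then the Krull dimension of `R ⧸ I` equals `d`. -/
theorem krullDim_quotient_nullcone_ideal (k c d : ℕ) (χ : Fin d → Fin k → ℤ)
    (hχ : ∀ i, χ i ≠ 0) :
    ringKrullDim (MvPolynomial (SymVar c d) ℂ ⧸
      Ideal.span {p : MvPolynomial (SymVar c d) ℂ | ∃ e : SymVar c d →₀ ℕ,
        p = monomial e 1 ∧ monWeight k c d χ e = 0 ∧ e ≠ 0}) = (d : WithBot ℕ∞) := by
  exact le_antisymm (dim_upper k c d χ) (dim_lower k c d χ hχ)
end
end
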